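/- The higher Prony map is injective on minimal data: suppose two parameter tuples (x_1 < ⋯ < x_n; α_1, …, α_{n−d}) and (x'_1 < ⋯ < x'_n; α'_1, …, α'_{n−d}) both satisfy the coprimality condition that Q(t) = ∏_{r=1}^{n}(1 − x_r t) is coprime to R(t) = Σ_{i=1}^{n−d} α_i ∏_{r ∉ {i,…,i+d}}(1 − x_r t) (and likewise for the primed data), and that they produce the same normalized moments c_j = c'_j for 0 ≤ j ≤ 2n−1. Then x_r = x'_r for all r and α_i = α'_i for all i. -/

import Mathlib

open Finset Polynomial PowerSeries

/-- The complete homogeneous symmetric polynomial of degree `j` evaluated at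
`v : Fin m → ℝ` (sum of all monomials of total degree `j`, with `hsymm 0 v = 1`). -/
noncomputable def hsymm {m : ℕ} (j : ℕ) (v : Fin m → ℝ) : ℝ :=
  haveI := Classical.decPred (fun f : Fin j → Fin m => Monotone f)
  ∑ f ∈ Finset.univ.filter (fun f : Fin j → Fin m => Monotone f), ∏ i, v (f i)

/-- The normalized moment sequence: `c_j = 0` for `j < d` and
`c_{d+j} = Σ_{i=1}^{n-d} α_i h_j(x_i, …, x_{i+d})`. -/
noncomputable def cseq (d n : ℕ) (x : Fin n → ℝ) (α : Fin (n - d) → ℝ) (j : ℕ) : ℝ :=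
  if d ≤ j then
    ∑ i : Fin (n - d), α i * hsymm (j - d)
      (fun k : Fin (d + 1) => x ⟨i.1 + k.1, by have h1 := i.2; have h2 := k.2; omega⟩)
  else 0

/-- `Q(t) = ∏_{r=1}^{n} (1 - x_r t)`. -/
noncomputable def Qpoly (n : ℕ) (x : Fin n → ℝ) : Polynomial ℝ :=
  ∏ r : Fin n, (1 - Polynomial.C (x r) * Polynomial.X)

/-- `R(t) = Σ_{i=1}^{n-d} α_i ∏_{r ∉ {i,…,i+d}} (1 - x_r t)`. -/
noncomputable def Rpoly (d n : ℕ) (x : Fin n → ℝ) (α : Fin (n - d) → ℝ) : Polynomial ℝ :=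
  ∑ i : Fin (n - d), Polynomial.C (α i) *
    ∏ r ∈ Finset.univ.filter (fun r : Fin n => r.1 < i.1 ∨ i.1 + d < r.1),
      (1 - Polynomial.C (x r) * Polynomial.X)


lemma hsymm_zero {m : ℕ} (v : Fin m → ℝ) : hsymm 0 v = 1 := by
  unfold hsymm
  have hmono : ∀ f : Fin 0 → Fin m, Monotone f := fun f a => a.elim0
  simp [hmono]

lemma hsymm_succ_nil (j : ℕ) (v : Fin 0 → ℝ) : hsymm (j + 1) v = 0 := by
  unfold hsymm
  apply Finset.sum_eq_zero
  intro f _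
  exact (f 0).elim0

lemma hsymm_succ {m : ℕ} (j : ℕ) (v : Fin (m + 1) → ℝ) :
    hsymm (j + 1) v = v 0 * hsymm j v + hsymm (j + 1) (fun k : Fin m => v k.succ) := by
  classical
  unfold hsymm
  rw [← Finset.sum_filter_add_sum_filter_not _ (fun f : Fin (j + 1) → Fin (m + 1) => f 0 = 0)]
  congr 1
  · rw [Finset.mul_sum]
    symm
    refine Finset.sum_bij (fun g _ => (Fin.cons 0 g : Fin (j + 1) → Fin (m + 1))) ?_ ?_ ?_ ?_
    · intro g hg
      simp only [Finset.mem_filter, Finset.mem_univ, true_and] at hg ⊢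
      refine ⟨?_, by simp⟩
      intro a b hab
      induction a using Fin.cases with
      | zero => simp
      | succ a =>
        induction b using Fin.cases with
        | zero => simp at hab
        | succ b => simpa using hg (Fin.succ_le_succ_iff.mp hab)
    · intro g _ g' _ h
      exact (Fin.cons_right_injective (α := fun _ => Fin (m + 1)) 0) h
    · intro f hf
      simp only [Finset.mem_filter, Finset.mem_univ, true_and] at hf
      refine ⟨Fin.tail f, ?_, ?_⟩
      · simp only [Finset.mem_filter, Finset.mem_univ, true_and]
        intro a b hab
        exact hf.1 (Fin.succ_le_succ_iff.mpr hab)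
      · show (Fin.cons 0 (Fin.tail f) : Fin (j + 1) → Fin (m + 1)) = f
        rw [← hf.2, Fin.cons_self_tail]
    · intro g _
      rw [Fin.prod_univ_succ]
      simp
  · symm
    refine Finset.sum_bij (fun g _ => (fun i => (g i).succ : Fin (j + 1) → Fin (m + 1))) ?_ ?_ ?_ ?_
    · intro g hg
      simp only [Finset.mem_filter, Finset.mem_univ, true_and] at hg ⊢
      exact ⟨fun a b hab => Fin.succ_le_succ_iff.mpr (hg hab), Fin.succ_ne_zero _⟩
    · intro g _ g' _ h
      funext i
      exact Fin.succ_injective _ (congrFun h i)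
    · intro f hf
      simp only [Finset.mem_filter, Finset.mem_univ, true_and] at hf
      have hne : ∀ i, f i ≠ 0 := by
        intro i hi
        apply hf.2
        have := hf.1 (Fin.zero_le i)
        rw [hi] at this
        exact Fin.le_zero_iff.mp this
      refine ⟨fun i => (f i).pred (hne i), ?_, ?_⟩
      · simp only [Finset.mem_filter, Finset.mem_univ, true_and]
        intro a b hab
        exact Fin.pred_le_pred_iff.mpr (hf.1 hab)
      · funext i
        simp
    · intro g _
      rfl

/-- Generating function of the complete homogeneous symmetric polynomials. -/
lemma hsymm_gen : ∀ {m : ℕ} (v : Fin m → ℝ),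
    PowerSeries.mk (fun j => hsymm j v) *
      ((∏ k : Fin m, (1 - Polynomial.C (v k) * Polynomial.X) : Polynomial ℝ) : PowerSeries ℝ) = 1 := by
  intro m
  induction m with
  | zero =>
    intro v
    ext j
    cases j with
    | zero => simp [hsymm_zero]
    | succ j => simp [hsymm_succ_nil, PowerSeries.coeff_one]
  | succ m ih =>
    intro v
    rw [Fin.prod_univ_succ, Polynomial.coe_mul, ← mul_assoc, ← ih (fun k => v k.succ)]
    congr 1
    have : ((1 - Polynomial.C (v 0) * Polynomial.X : Polynomial ℝ) : PowerSeries ℝ)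
        = 1 - PowerSeries.C (v 0) * PowerSeries.X := by
      simp
    rw [this, mul_sub, mul_one]
    ext j
    cases j with
    | zero => simp [hsymm_zero]
    | succ j =>
      rw [map_sub, ← mul_assoc, PowerSeries.coeff_succ_mul_X, mul_comm, PowerSeries.coeff_C_mul]
      simp only [PowerSeries.coeff_mk]
      rw [hsymm_succ j v]
      ring

lemma Q_split (d n : ℕ) (x : Fin n → ℝ) (i : Fin (n - d)) :
    Qpoly n x = (∏ k : Fin (d + 1), (1 - Polynomial.C
        (x ⟨i.1 + k.1, by have h1 := i.2; have h2 := k.2; omega⟩) * Polynomial.X)) *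
      ∏ r ∈ Finset.univ.filter (fun r : Fin n => r.1 < i.1 ∨ i.1 + d < r.1),
      (1 - Polynomial.C (x r) * Polynomial.X) := by
  unfold Qpoly
  rw [← Finset.prod_filter_not_mul_prod_filter Finset.univ
    (fun r : Fin n => r.1 < i.1 ∨ i.1 + d < r.1)]
  congr 1
  symm
  refine Finset.prod_bij (fun (k : Fin (d + 1)) _ =>
    (⟨i.1 + k.1, by have h1 := i.2; have h2 := k.2; omega⟩ : Fin n)) ?_ ?_ ?_ ?_
  · intro k _
    have := k.2
    simp only [Finset.mem_filter, Finset.mem_univ, true_and]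
    omega
  · intro k _ l _ h
    simp only [Fin.mk.injEq] at h
    exact Fin.ext (by omega)
  · intro r hr
    simp only [Finset.mem_filter, Finset.mem_univ, true_and] at hr
    refine ⟨⟨r.1 - i.1, by omega⟩, Finset.mem_univ _, ?_⟩
    apply Fin.ext
    show i.1 + (r.1 - i.1) = r.1
    omega
  · intro k _
    rfl

lemma cseq_gen (d n : ℕ) (x : Fin n → ℝ) (α : Fin (n - d) → ℝ) :
    PowerSeries.mk (cseq d n x α) * (Qpoly n x : PowerSeries ℝ) =
      ((Polynomial.X ^ d * Rpoly d n x α : Polynomial ℝ) : PowerSeries ℝ) := by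
  have h1 : PowerSeries.mk (cseq d n x α) = PowerSeries.X ^ d *
      ∑ i : Fin (n - d), PowerSeries.C (α i) * PowerSeries.mk (fun j => hsymm j
      (fun k : Fin (d + 1) => x ⟨i.1 + k.1, by have h1 := i.2; have h2 := k.2; omega⟩)) := by
    ext j
    rw [PowerSeries.coeff_X_pow_mul', PowerSeries.coeff_mk]
    unfold cseq
    split_ifs
    · rw [map_sum]
      simp
    · rfl
  rw [h1, mul_assoc, Finset.sum_mul, Polynomial.coe_mul, Polynomial.coe_pow, Polynomial.coe_X]
  congr 1
  unfold Rpoly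
  rw [← Polynomial.coeToPowerSeries.ringHom_apply (φ := Finset.sum _ _), map_sum]
  apply Finset.sum_congr rfl
  intro i _
  rw [Polynomial.coeToPowerSeries.ringHom_apply, Q_split d n x i, Polynomial.coe_mul,
    Polynomial.coe_mul, Polynomial.coe_C, mul_assoc, ← mul_assoc (PowerSeries.mk _), hsymm_gen,
    one_mul]

lemma natDegree_prod_le' {n : ℕ} (x : Fin n → ℝ) (S : Finset (Fin n)) :
    (∏ r ∈ S, (1 - Polynomial.C (x r) * Polynomial.X)).natDegree ≤ S.card := by
  refine (Polynomial.natDegree_prod_le _ _).trans ?_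
  rw [Finset.card_eq_sum_ones]
  apply Finset.sum_le_sum
  intro i _
  compute_degree

lemma reflect_prod {n : ℕ} (x : Fin n → ℝ) (S : Finset (Fin n)) :
    Polynomial.reflect S.card (∏ r ∈ S, (1 - Polynomial.C (x r) * Polynomial.X)) =
      ∏ r ∈ S, (Polynomial.X - Polynomial.C (x r)) := by
  classical
  induction S using Finset.induction_on with
  | empty => simp
  | insert a S ha ih =>
    rw [Finset.prod_insert ha, Finset.prod_insert ha, Finset.card_insert_of_notMem ha, add_comm,
      Polynomial.reflect_mul _ _ (F := 1) (by compute_degree) (natDegree_prod_le' x S), ih]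
    congr 1
    rw [Polynomial.reflect_sub, Polynomial.reflect_one, Polynomial.reflect_C_mul]
    have : Polynomial.reflect 1 (Polynomial.X : Polynomial ℝ) = 1 := by
      have := Polynomial.reflect_monomial (R := ℝ) 1 1
      simpa using this
    simp [this]

lemma card_compl_window (d n : ℕ) (i : Fin (n - d)) :
    (Finset.univ.filter (fun r : Fin n => r.1 < i.1 ∨ i.1 + d < r.1)).card = n - d - 1 := by
  have h := Finset.card_filter_add_card_filter_not (s := (Finset.univ : Finset (Fin n)))
    (fun r : Fin n => r.1 < i.1 ∨ i.1 + d < r.1)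
  have h2 : (Finset.univ.filter (fun r : Fin n => ¬ (r.1 < i.1 ∨ i.1 + d < r.1))).card
      = (Finset.univ : Finset (Fin (d + 1))).card := by
    symm
    refine Finset.card_bij (fun (k : Fin (d + 1)) _ =>
      (⟨i.1 + k.1, by have h1 := i.2; have h2 := k.2; omega⟩ : Fin n)) ?_ ?_ ?_
    · intro k _
      have := k.2
      simp only [Finset.mem_filter, Finset.mem_univ, true_and]
      omega
    · intro k _ l _ h
      simp only [Fin.mk.injEq] at h
      exact Fin.ext (by omega)
    · intro r hr
      simp only [Finset.mem_filter, Finset.mem_univ, true_and] at hr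
      refine ⟨⟨r.1 - i.1, by omega⟩, Finset.mem_univ _, ?_⟩
      apply Fin.ext
      show i.1 + (r.1 - i.1) = r.1
      omega
  simp only [Finset.card_univ, Fintype.card_fin] at h h2
  omega

lemma natDegree_R (d n : ℕ) (x : Fin n → ℝ) (α : Fin (n - d) → ℝ) :
    (Rpoly d n x α).natDegree ≤ n - d - 1 := by
  unfold Rpoly
  apply Polynomial.natDegree_sum_le_of_forall_le
  intro i _
  refine (Polynomial.natDegree_C_mul_le _ _).trans ?_
  refine (natDegree_prod_le' x _).trans ?_
  rw [card_compl_window]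

lemma natDegree_Q (n : ℕ) (x : Fin n → ℝ) : (Qpoly n x).natDegree ≤ n := by
  have := natDegree_prod_le' x Finset.univ
  simpa [Qpoly] using this

lemma Q_eval_zero (n : ℕ) (x : Fin n → ℝ) : (Qpoly n x).eval 0 = 1 := by
  unfold Qpoly
  rw [Polynomial.eval_prod]
  simp

lemma reflect_sum' {ι : Type*} (s : Finset ι) (N : ℕ) (f : ι → Polynomial ℝ) :
    Polynomial.reflect N (∑ i ∈ s, f i) = ∑ i ∈ s, Polynomial.reflect N (f i) := by
  classical
  induction s using Finset.induction_on with
  | empty => simp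
  | insert a s ha ih => rw [Finset.sum_insert ha, Finset.sum_insert ha, Polynomial.reflect_add, ih]

lemma reflect_R (d n : ℕ) (x : Fin n → ℝ) (α : Fin (n - d) → ℝ) :
    Polynomial.reflect (n - d - 1) (Rpoly d n x α) = ∑ i : Fin (n - d), Polynomial.C (α i) *
    ∏ r ∈ Finset.univ.filter (fun r : Fin n => r.1 < i.1 ∨ i.1 + d < r.1),
      (Polynomial.X - Polynomial.C (x r)) := by
  unfold Rpoly
  rw [reflect_sum']
  apply Finset.sum_congr rfl
  intro i _
  rw [Polynomial.reflect_C_mul, ← reflect_prod, card_compl_window]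

lemma R_inj (d n : ℕ) (x : Fin n → ℝ) (hx : StrictMono x) (α β : Fin (n - d) → ℝ)
    (h : Rpoly d n x α = Rpoly d n x β) : α = β := by
  have h := congrArg (Polynomial.reflect (n - d - 1)) h
  rw [reflect_R, reflect_R] at h
  have key : ∀ m : ℕ, ∀ hm : m < n - d, α ⟨m, hm⟩ = β ⟨m, hm⟩ := by
    intro m
    induction m using Nat.strong_induction_on with
    | _ m ih =>
    intro hm
    have h0 := congrArg (Polynomial.eval (x ⟨m, by omega⟩)) h
    simp only [Polynomial.eval_finsetSum, Polynomial.eval_mul, Polynomial.eval_C,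
      Polynomial.eval_prod, Polynomial.eval_sub, Polynomial.eval_X] at h0
    rw [← sub_eq_zero, ← Finset.sum_sub_distrib, Finset.sum_eq_single ⟨m, hm⟩] at h0
    · rw [← sub_mul] at h0
      rcases mul_eq_zero.mp h0 with h1 | h1
      · exact sub_eq_zero.mp h1
      · exfalso
        rw [Finset.prod_eq_zero_iff] at h1
        obtain ⟨r, hr, h2⟩ := h1
        simp only [Finset.mem_filter, Finset.mem_univ, true_and] at hr
        have h3 := hx.injective (sub_eq_zero.mp h2)
        rw [← h3] at hr
        simp only at hr
        omega
    · intro b _ hb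
      rcases lt_trichotomy b.1 m with hlt | heq | hgt
      · have := ih b.1 hlt b.2
        simp only [Fin.eta] at this
        rw [this, sub_self]
      · exact absurd (Fin.ext heq) hb
      · have hz : ∏ r ∈ Finset.univ.filter (fun r : Fin n => r.1 < b.1 ∨ b.1 + d < r.1),
            (x ⟨m, by omega⟩ - x r) = 0 := by
          apply Finset.prod_eq_zero (i := (⟨m, by omega⟩ : Fin n))
          · simp only [Finset.mem_filter, Finset.mem_univ, true_and]
            left
            exact hgt
          · simp
        rw [hz]
        simp
    · intro hne
      exact absurd (Finset.mem_univ _) hne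
  funext i
  exact key i.1 i.2

lemma Q_inj (n : ℕ) (x x' : Fin n → ℝ) (hx : StrictMono x) (hx' : StrictMono x')
    (h : Qpoly n x = Qpoly n x') : x = x' := by
  have h := congrArg (Polynomial.reflect (Finset.univ : Finset (Fin n)).card) h
  unfold Qpoly at h
  rw [reflect_prod, reflect_prod] at h
  apply (StrictMono.range_inj hx hx').mp
  ext t
  have h0 := congrArg (fun p => Polynomial.eval t p = 0) h
  simp only [Polynomial.eval_prod, Polynomial.eval_sub, Polynomial.eval_X, Polynomial.eval_C,
    Finset.prod_eq_zero_iff, Finset.mem_univ, true_and, sub_eq_zero, eq_iff_iff] at h0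
  simp only [Set.mem_range, eq_comm (b := t)]
  exact h0

/-- **Injectivity of the higher Prony map on minimal data.** If two parameter
tuples `(x; α)` and `(x'; α')`, each satisfying the coprimality condition for
`Q` and `R`, produce the same normalized moments `c_j` for `0 ≤ j ≤ 2n - 1`,
then they coincide. -/
theorem higher_prony_map_injective (d n : ℕ) (hn : d + 1 ≤ n)
    (x x' : Fin n → ℝ) (hx : StrictMono x) (hx' : StrictMono x')
    (α α' : Fin (n - d) → ℝ)
    (hcop : IsCoprime (Qpoly n x) (Rpoly d n x α))
    (hcop' : IsCoprime (Qpoly n x') (Rpoly d n x' α'))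
    (hmom : ∀ j : ℕ, j ≤ 2 * n - 1 → cseq d n x α j = cseq d n x' α' j) :
    x = x' ∧ α = α' := by
  have hcross : Rpoly d n x α * Qpoly n x' = Rpoly d n x' α' * Qpoly n x := by
    have hz : (Polynomial.X ^ d * Rpoly d n x α) * Qpoly n x' =
        (Polynomial.X ^ d * Rpoly d n x' α') * Qpoly n x := by
      have hdeg : ∀ (y y' : Fin n → ℝ) (β : Fin (n - d) → ℝ),
          ((Polynomial.X ^ d * Rpoly d n y β) * Qpoly n y').natDegree < 2 * n := by
        intro y y' β
        have h1 := natDegree_R d n y β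
        have h2 := natDegree_Q n y'
        have h3 := Polynomial.natDegree_mul_le (p := Polynomial.X ^ d * Rpoly d n y β)
          (q := Qpoly n y')
        have h4 := Polynomial.natDegree_mul_le (p := (Polynomial.X ^ d : Polynomial ℝ))
          (q := Rpoly d n y β)
        rw [Polynomial.natDegree_X_pow] at h4
        omega
      ext j
      by_cases hj : j < 2 * n
      · rw [← Polynomial.coeff_coe, ← Polynomial.coeff_coe, Polynomial.coe_mul,
          Polynomial.coe_mul (Polynomial.X ^ d * Rpoly d n x' α'), ← cseq_gen, ← cseq_gen,
          mul_assoc, mul_assoc, mul_comm (Qpoly n x' : PowerSeries ℝ), PowerSeries.coeff_mul,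
          PowerSeries.coeff_mul]
        apply Finset.sum_congr rfl
        intro p hp
        rw [Finset.HasAntidiagonal.mem_antidiagonal] at hp
        rw [PowerSeries.coeff_mk, PowerSeries.coeff_mk, hmom p.1 (by omega)]
      · rw [Polynomial.coeff_eq_zero_of_natDegree_lt (by have := hdeg x x' α; omega),
          Polynomial.coeff_eq_zero_of_natDegree_lt (by have := hdeg x' x α'; omega)]
    rw [mul_assoc, mul_assoc] at hz
    exact mul_left_cancel₀ (pow_ne_zero d Polynomial.X_ne_zero) hz
  have hd1 : Qpoly n x ∣ Qpoly n x' :=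
    hcop.dvd_of_dvd_mul_left ⟨Rpoly d n x' α', by rw [hcross, mul_comm]⟩
  have hd2 : Qpoly n x' ∣ Qpoly n x :=
    hcop'.dvd_of_dvd_mul_left ⟨Rpoly d n x α, by rw [← hcross, mul_comm]⟩
  have hQ0 : Qpoly n x ≠ 0 := by
    intro h
    have := Q_eval_zero n x
    rw [h] at this
    simp at this
  have hQ : Qpoly n x = Qpoly n x' := by
    obtain ⟨u, hu⟩ := associated_of_dvd_dvd hd1 hd2
    obtain ⟨c, -, hc⟩ := Polynomial.isUnit_iff.mp u.isUnit
    have h0 := congrArg (Polynomial.eval 0) hu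
    rw [← hc, Polynomial.eval_mul, Q_eval_zero, Q_eval_zero, Polynomial.eval_C, one_mul] at h0
    rw [← hu, ← hc, h0]
    simp
  have hxx := Q_inj n x x' hx hx' hQ
  subst hxx
  exact ⟨rfl, R_inj d n x hx α α' (mul_right_cancel₀ hQ0 hcross)⟩
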